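/- Let (P, ⪰) be a finite poset with P = {p_1,...,p_n} and let H_P ⊂ S = K[x_1,...,x_n,y_1,...,y_n] be its Hibi ideal. Then for every integer k ≥ 1, the set of associated primes of H_P^k is Ass(H_P^k) = { (x_i, y_j) : p_i ⪯ p_j }. -/

import Mathlib

/-!
The theorem rests on the decomposition `H_P ^ k = ⨅_{p_i ⪯ p_j} (x_i, y_j) ^ k`. A monomial in the
right-hand side, with exponents `a` in `x` and `b` in `y`, satisfies `a i + b j ≥ k` whenever
`p_i ⪯ p_j`. For `t < k` let `𝓘_t` be the poset ideal generated by `{p_j : b j ≤ t}`. If `p_i ∈ 𝓘_t`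
then `t ≥ k - a i`, which happens for at most `a i` values of `t`; if `p_j ∉ 𝓘_t` then `t < b j`.
Hence `∏_{t < k} u_{𝓘_t} ∈ H_P ^ k` divides the monomial.

The order of vanishing along a set of variables is additive over a domain, so powers of the prime
ideals `(x_i, y_j)` are primary. These primes are pairwise incomparable, so the decomposition is
a minimal primary decomposition, and the first uniqueness theorem reads off the associated primes.
-/

open MvPolynomial

noncomputable section

variable (K : Type*) [Field K]

/-- The set of associated primes of `S/I`. -/
def assPrimes {σ : Type*} (I : Ideal (MvPolynomial σ K)) : Set (Ideal (MvPolynomial σ K)) :=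
  associatedPrimes (MvPolynomial σ K) (MvPolynomial σ K ⧸ I)

/-- The v-number of `I` at a prime `p`:
`min {d : ∃ homogeneous f of degree d with (I : f) = p}`. -/
def vNumberAt {σ : Type*} (I p : Ideal (MvPolynomial σ K)) : ℕ :=
  sInf {d | ∃ f : MvPolynomial σ K, f.IsHomogeneous d ∧ I.colon (Ideal.span {f}) = p}

/-- The v-number of `I`:
`min {d : ∃ homogeneous f of degree d with (I : f) ∈ Ass(I)}`. -/
def vNumber {σ : Type*} (I : Ideal (MvPolynomial σ K)) : ℕ :=
  sInf {d | ∃ f : MvPolynomial σ K, f.IsHomogeneous d ∧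
    I.colon (Ideal.span {f}) ∈ assPrimes K I}

/-- The initial degree `α(I) = min {d : I_d ≠ 0}`. -/
def initialDegree {σ : Type*} (I : Ideal (MvPolynomial σ K)) : ℕ :=
  sInf {d | ∃ f ∈ I, f ≠ 0 ∧ f.IsHomogeneous d}

/-- The generator `u_𝓘 = (∏_{i ∈ 𝓘} x_i) (∏_{i ∉ 𝓘} y_i)` of the Hibi ideal attached to a
poset ideal `𝓘`; the variables are indexed by `P ⊕ P`, `x_i = X (inl i)`, `y_i = X (inr i)`. -/
def posetGen {P : Type*} [Fintype P] [DecidableEq P] (𝓘 : Finset P) :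
    MvPolynomial (P ⊕ P) K :=
  (∏ i ∈ 𝓘, X (Sum.inl i)) * ∏ i ∈ 𝓘ᶜ, X (Sum.inr i)

/-- The Hibi ideal of a finite poset `P`, generated by the monomials `u_𝓘` for all poset
ideals (lower sets) `𝓘` of `P`. -/
def HibiIdeal (P : Type*) [Fintype P] [DecidableEq P] [PartialOrder P] :
    Ideal (MvPolynomial (P ⊕ P) K) :=
  Ideal.span {f | ∃ 𝓘 : Finset P, (∀ a b : P, a ≤ b → b ∈ 𝓘 → a ∈ 𝓘) ∧ f = posetGen K 𝓘}

section PrimaryDecomposition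

theorem isMinimalPrimaryDecomposition_iInf {R ι : Type*} [CommSemiring R] [DecidableEq (Ideal R)]
    [Fintype ι] {Q : ι → Ideal R} (primary : ∀ i, (Q i).IsPrimary)
    (incomparable : ∀ i j, (Q i).radical ≤ (Q j).radical → i = j) :
    Submodule.IsMinimalPrimaryDecomposition (⨅ i, Q i) (Finset.univ.image Q) where
  inf_eq := by rw [Finset.inf_image, Function.id_comp, Finset.inf_univ_eq_iInf]
  primary := by simpa using primary
  distinct := by
    simp only [Finset.coe_image, Finset.coe_univ, Set.image_univ]
    rintro _ ⟨i, rfl⟩ _ ⟨j, rfl⟩ hij h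
    simp only [Submodule.colon_univ] at h
    exact hij (congrArg Q (incomparable i j h.le))
  minimal := by
    simp only [Finset.mem_image, Finset.mem_univ, true_and, forall_exists_index,
      forall_apply_eq_imp_iff]
    intro j h
    obtain ⟨_, hQ, hle⟩ :=
      (Ideal.isPrime_radical (primary j)).inf_le'.mp (h.trans Ideal.le_radical)
    obtain ⟨hne, i, -, rfl⟩ := by simpa only [Finset.mem_erase, Finset.mem_image] using hQ
    exact hne (congrArg Q (incomparable i j (Ideal.radical_le_radical_iff.mpr hle)))

variable {R : Type*} [CommRing R]

theorem associatedPrimes_quotient_eq (I : Ideal R) :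
    associatedPrimes R (R ⧸ I) = Submodule.associatedPrimes I := by
  have colon_mk (f : R) :
      (⊥ : Submodule R (R ⧸ I)).colon {Ideal.Quotient.mk I f} = Submodule.colon I {f} := by
    ext r
    rw [Submodule.mem_colon_singleton, Submodule.mem_colon_singleton, Submodule.mem_bot,
      Algebra.smul_def, Ideal.Quotient.algebraMap_eq, ← map_mul, Ideal.Quotient.eq_zero_iff_mem,
      smul_eq_mul]
  ext p
  rw [AssociatedPrimes.mem_iff, IsAssociatedPrime, Submodule.AssociatePrimes.mem_iff,
    Submodule.isAssociatedPrime_def, Submodule.isAssociatedPrime_def,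
    Ideal.Quotient.mk_surjective.exists]
  simp only [colon_mk]

theorem associatedPrimes_quotient_iInf_of_isPrimary {ι : Type*} [Finite ι] {Q : ι → Ideal R}
    (primary : ∀ i, (Q i).IsPrimary)
    (incomparable : ∀ i j, (Q i).radical ≤ (Q j).radical → i = j) :
    associatedPrimes R (R ⧸ ⨅ i, Q i) = Set.range fun i => (Q i).radical := by
  classical
  cases nonempty_fintype ι
  rw [associatedPrimes_quotient_eq,
    ← (isMinimalPrimaryDecomposition_iInf primary incomparable).image_radical_eq_associated_primes]
  simp only [Finset.coe_image, Finset.coe_univ, Set.image_univ, ← Set.range_comp,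
    Function.comp_def, Submodule.colon_univ]

end PrimaryDecomposition

section Monomials

variable {σ R : Type*} [CommSemiring R]

theorem mem_ideal_of_forall_monomial_mem {I : Ideal (MvPolynomial σ R)} {f : MvPolynomial σ R}
    (h : ∀ d ∈ f.support, monomial d (1 : R) ∈ I) : f ∈ I := by
  rw [f.as_sum]
  refine Ideal.sum_mem _ fun d hd => ?_
  rw [← mul_one (coeff d f), ← C_mul_monomial]
  exact Ideal.mul_mem_left _ _ (h d hd)

theorem monomial_sum_eq_prod_mul_prod {α β : Type*} [Fintype α] [Fintype β] (d : α ⊕ β →₀ ℕ) :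
    monomial d (1 : R) =
      (∏ a, X (Sum.inl a) ^ d (Sum.inl a)) * ∏ b, X (Sum.inr b) ^ d (Sum.inr b) := by
  rw [monomial_eq, C_1, one_mul, Finsupp.prod_fintype _ _ (fun _ => pow_zero _),
    Fintype.prod_sum_type]

theorem weight_indicator_one_eq_zero_iff {s : Set σ} {d : σ →₀ ℕ} :
    Finsupp.weight (s.indicator 1) d = 0 ↔ ∀ i ∈ s, d i = 0 := by
  simp only [Finsupp.weight_apply, Finsupp.sum, Finset.sum_eq_zero_iff, Finsupp.mem_support_iff,
    smul_eq_mul, mul_eq_zero, Set.indicator_apply_eq_zero, Pi.one_apply, one_ne_zero]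
  grind

theorem weight_indicator_one_pair {a b : σ} (hab : a ≠ b) (d : σ →₀ ℕ) :
    Finsupp.weight (({a, b} : Set σ).indicator 1) d = d a + d b := by
  classical
  induction d using Finsupp.induction_linear with
  | zero => simp
  | add d e hd he => rw [map_add, hd, he, Finsupp.add_apply, Finsupp.add_apply, add_add_add_comm]
  | single i n =>
    rw [Finsupp.weight_single]
    by_cases ha : i = a <;> by_cases hb : i = b <;> simp_all

end Monomials

section OrderAlong

variable {σ R : Type*} [CommSemiring R]

/-- The order of vanishing of a polynomial along the coordinate subspace on which the variables
in `s` vanish: the least degree of its monomials in those variables, and `⊤` for the zero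
polynomial. It is computed in the power series ring, where orders are additive over a domain. -/
def orderAlong (s : Set σ) (f : MvPolynomial σ R) : ℕ∞ :=
  (f : MvPowerSeries σ R).weightedOrder (s.indicator 1)

theorem le_orderAlong_iff {s : Set σ} {n : ℕ} {f : MvPolynomial σ R} :
    n ≤ orderAlong s f ↔ ∀ d ∈ f.support, n ≤ Finsupp.weight (s.indicator 1) d := by
  constructor
  · intro h d hd
    exact_mod_cast h.trans (MvPowerSeries.weightedOrder_le _ (by simpa using hd))
  · intro h
    refine MvPowerSeries.nat_le_weightedOrder _ fun d hd => ?_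
    rw [coeff_coe, ← notMem_support_iff]
    exact fun hmem => (h d hmem).not_gt hd

theorem orderAlong_mul [NoZeroDivisors R] (s : Set σ) (f g : MvPolynomial σ R) :
    orderAlong s (f * g) = orderAlong s f + orderAlong s g := by
  rw [orderAlong, coe_mul, MvPowerSeries.weightedOrder_mul, orderAlong, orderAlong]

theorem monomial_mem_span_X_image_pow_weight (s : Set σ) (d : σ →₀ ℕ) :
    monomial d (1 : R) ∈ Ideal.span (X '' s) ^ Finsupp.weight (s.indicator 1) d := by
  induction d using Finsupp.induction_linear with
  | zero => simp
  | add d e hd he =>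
    rw [map_add, pow_add, ← one_mul (1 : R), ← monomial_mul]
    exact Ideal.mul_mem_mul hd he
  | single i n =>
    rw [Finsupp.weight_single, ← X_pow_eq_monomial]
    by_cases hi : i ∈ s
    · simpa [hi] using Ideal.pow_mem_pow (Ideal.subset_span (Set.mem_image_of_mem X hi)) n
    · simp [hi]

theorem mem_span_X_image_iff {s : Set σ} {f : MvPolynomial σ R} :
    f ∈ Ideal.span (X '' s) ↔ 1 ≤ orderAlong s f := by
  rw [mem_ideal_span_X_image, ← Nat.cast_one, le_orderAlong_iff]
  refine forall₂_congr fun d _ => ?_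
  rw [Nat.one_le_iff_ne_zero, Ne, weight_indicator_one_eq_zero_iff]
  push Not
  rfl

theorem mem_span_X_image_pow_iff {s : Set σ} {n : ℕ} {f : MvPolynomial σ R} :
    f ∈ Ideal.span (X '' s) ^ n ↔ n ≤ orderAlong s f := by
  constructor
  · intro hf
    induction n generalizing f with
    | zero => simp
    | succ n ih =>
      rw [pow_succ] at hf
      refine Submodule.mul_induction_on hf (fun g hg h hh => ?_) fun g h hg hh => ?_
      · rw [orderAlong, coe_mul, Nat.cast_succ]
        exact (add_le_add (ih hg) (mem_span_X_image_iff.mp hh)).trans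
          (MvPowerSeries.le_weightedOrder_mul _)
      · rw [orderAlong, coe_add]
        exact (le_min hg hh).trans (MvPowerSeries.min_weightedOrder_le_add _)
  · exact fun hf => mem_ideal_of_forall_monomial_mem fun d hd =>
      Ideal.pow_le_pow_right (le_orderAlong_iff.mp hf d hd)
        (monomial_mem_span_X_image_pow_weight s d)

theorem span_X_image_le_span_X_image_iff [Nontrivial R] {s t : Set σ} :
    (Ideal.span (X '' s) : Ideal (MvPolynomial σ R)) ≤ Ideal.span (X '' t) ↔ s ⊆ t := by
  refine ⟨fun h i hi => ?_, fun h => Ideal.span_mono (Set.image_mono h)⟩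
  have hX : (X i : MvPolynomial σ R) ∈ Ideal.span (X '' t) :=
    h (Ideal.subset_span (Set.mem_image_of_mem X hi))
  obtain ⟨j, hj, hij⟩ := mem_ideal_span_X_image.mp hX (Finsupp.single i 1) (by simp)
  rwa [(Finsupp.single_apply_ne_zero.mp hij).1] at hj

variable [IsDomain R]

theorem isPrime_span_X_image (s : Set σ) :
    (Ideal.span (X '' s) : Ideal (MvPolynomial σ R)).IsPrime where
  ne_top' := by
    rw [Ideal.ne_top_iff_one, mem_span_X_image_iff, orderAlong, coe_one,
      MvPowerSeries.weightedOrder_one]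
    exact one_pos.not_ge
  mem_or_mem' {f g} hfg := by
    simp only [mem_span_X_image_iff, orderAlong_mul, Order.one_le_iff_ne_zero] at hfg ⊢
    contrapose! hfg
    rw [hfg.1, hfg.2, add_zero]

theorem radical_span_X_image_pow (s : Set σ) {n : ℕ} (hn : n ≠ 0) :
    ((Ideal.span (X '' s) : Ideal (MvPolynomial σ R)) ^ n).radical = Ideal.span (X '' s) := by
  rw [Ideal.radical_pow _ hn, (isPrime_span_X_image s).radical]

theorem isPrimary_span_X_image_pow (s : Set σ) {n : ℕ} (hn : n ≠ 0) :
    ((Ideal.span (X '' s) : Ideal (MvPolynomial σ R)) ^ n).IsPrimary := by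
  refine Ideal.isPrimary_iff.mpr ⟨?_, fun {f g} hfg => ?_⟩
  · exact ne_top_of_le_ne_top (isPrime_span_X_image s).ne_top (Ideal.pow_le_self hn)
  · rw [radical_span_X_image_pow s hn, mem_span_X_image_iff, mem_span_X_image_pow_iff,
      Order.one_le_iff_ne_zero, or_iff_not_imp_right, not_not]
    intro hg
    rwa [mem_span_X_image_pow_iff, orderAlong_mul, hg, add_zero] at hfg

end OrderAlong

theorem associatedPrimes_quotient_iInf_span_X_image_pow {σ R ι : Type*} [CommRing R] [IsDomain R]
    [Finite ι] {s : ι → Set σ} (hs : ∀ i j, s i ⊆ s j → i = j) {n : ι → ℕ} (hn : ∀ i, n i ≠ 0) :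
    associatedPrimes (MvPolynomial σ R)
        (MvPolynomial σ R ⧸ (⨅ i, Ideal.span (X '' s i) ^ n i : Ideal (MvPolynomial σ R))) =
      Set.range fun i => Ideal.span (X '' s i) := by
  rw [associatedPrimes_quotient_iInf_of_isPrimary fun i => isPrimary_span_X_image_pow (s i) (hn i)]
  · simp only [radical_span_X_image_pow _ (hn _)]
  · intro i j hij
    rw [radical_span_X_image_pow _ (hn i), radical_span_X_image_pow _ (hn j),
      span_X_image_le_span_X_image_iff] at hij
    exact hs i j hij

section ThresholdIdeal

variable {P : Type*} [Fintype P] [Preorder P]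

open Classical in
/-- The poset ideal generated by the elements at which `b` is at most `t`. It is a `Finset`, as
`posetGen` requires, and serves to factor a monomial whose `y`-exponents are given by `b`. -/
def thresholdIdeal (b : P → ℕ) (t : ℕ) : Finset P := {p | ∃ q, p ≤ q ∧ b q ≤ t}

theorem mem_thresholdIdeal {b : P → ℕ} {t : ℕ} {p : P} :
    p ∈ thresholdIdeal b t ↔ ∃ q, p ≤ q ∧ b q ≤ t := by
  simp [thresholdIdeal]

theorem isLowerSet_thresholdIdeal (b : P → ℕ) (t : ℕ) :
    IsLowerSet (thresholdIdeal b t : Set P) := by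
  intro q p hpq hq
  obtain ⟨r, hqr, hr⟩ := mem_thresholdIdeal.mp hq
  exact mem_thresholdIdeal.mpr ⟨r, hpq.trans hqr, hr⟩

theorem card_filter_mem_thresholdIdeal_le [DecidableEq P] {b : P → ℕ} {k a : ℕ} {p : P}
    (hab : ∀ q, p ≤ q → k ≤ a + b q) :
    (Finset.range k |>.filter fun t => p ∈ thresholdIdeal b t).card ≤ a := by
  have subset : (Finset.range k |>.filter fun t => p ∈ thresholdIdeal b t) ⊆
      Finset.Ico (k - a) k := by
    intro t ht
    obtain ⟨htk, hpt⟩ := Finset.mem_filter.mp ht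
    obtain ⟨q, hpq, hq⟩ := mem_thresholdIdeal.mp hpt
    have := hab q hpq
    rw [Finset.mem_range] at htk
    rw [Finset.mem_Ico]
    omega
  calc _ ≤ (Finset.Ico (k - a) k).card := Finset.card_le_card subset
    _ ≤ a := by rw [Nat.card_Ico]; omega

theorem card_filter_notMem_thresholdIdeal_le [DecidableEq P] (b : P → ℕ) (k : ℕ) (p : P) :
    (Finset.range k |>.filter fun t => p ∉ thresholdIdeal b t).card ≤ b p := by
  have subset : (Finset.range k |>.filter fun t => p ∉ thresholdIdeal b t) ⊆
      Finset.range (b p) := by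
    intro t ht
    rw [Finset.mem_range, ← not_le]
    exact fun hbt => (Finset.mem_filter.mp ht).2 (mem_thresholdIdeal.mpr ⟨p, le_rfl, hbt⟩)
  simpa only [Finset.card_range] using Finset.card_le_card subset

end ThresholdIdeal

section Hibi

variable {P : Type*} [Fintype P] [DecidableEq P]

theorem prod_posetGen {ι : Type*} (T : Finset ι) (I : ι → Finset P) :
    ∏ t ∈ T, posetGen K (I t) =
      (∏ p, X (Sum.inl p) ^ (T.filter fun t => p ∈ I t).card) *
        ∏ p, X (Sum.inr p) ^ (T.filter fun t => p ∉ I t).card := by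
  have prod_comm (J : ι → Finset P) (x : P → MvPolynomial (P ⊕ P) K) :
      ∏ t ∈ T, ∏ p ∈ J t, x p = ∏ p, x p ^ (T.filter fun t => p ∈ J t).card := by
    simp only [← Finset.prod_const]
    exact Finset.prod_comm' (by simp)
  simp only [posetGen, Finset.prod_mul_distrib, prod_comm, Finset.mem_compl]

variable [PartialOrder P]

theorem hibiIdeal_le_span_X_image {i j : P} (hij : i ≤ j) :
    HibiIdeal K P ≤ Ideal.span (X '' {Sum.inl i, Sum.inr j}) := by
  refine Ideal.span_le.mpr ?_
  rintro _ ⟨I, hI, rfl⟩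
  by_cases hi : i ∈ I
  · refine Ideal.mul_mem_right _ _ (Ideal.mem_of_dvd _ (Finset.dvd_prod_of_mem _ hi) ?_)
    exact Ideal.subset_span (Set.mem_image_of_mem X (by simp))
  · have hj : j ∈ Iᶜ := Finset.mem_compl.mpr fun hj => hi (hI i j hij hj)
    refine Ideal.mul_mem_left _ _ (Ideal.mem_of_dvd _ (Finset.dvd_prod_of_mem _ hj) ?_)
    exact Ideal.subset_span (Set.mem_image_of_mem X (by simp))

theorem monomial_mem_hibiIdeal_pow {k : ℕ} {d : P ⊕ P →₀ ℕ}
    (hd : ∀ i j, i ≤ j → k ≤ d (Sum.inl i) + d (Sum.inr j)) :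
    monomial d (1 : K) ∈ HibiIdeal K P ^ k := by
  let I := thresholdIdeal fun p => d (Sum.inr p)
  have prod_mem : ∏ t ∈ Finset.range k, posetGen K (I t) ∈ HibiIdeal K P ^ k := by
    have gen_mem (t : ℕ) : posetGen K (I t) ∈ HibiIdeal K P :=
      Ideal.subset_span ⟨I t, fun _ _ hpq hq => isLowerSet_thresholdIdeal _ t hpq hq, rfl⟩
    simpa only [Finset.prod_const, Finset.card_range] using
      Ideal.prod_mem_prod (s := Finset.range k) fun t _ => gen_mem t
  refine Ideal.mem_of_dvd _ ?_ prod_mem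
  rw [prod_posetGen, monomial_sum_eq_prod_mul_prod]
  refine mul_dvd_mul (Finset.prod_dvd_prod_of_dvd _ _ fun p _ => pow_dvd_pow _ ?_)
    (Finset.prod_dvd_prod_of_dvd _ _ fun p _ => pow_dvd_pow _ ?_)
  · exact card_filter_mem_thresholdIdeal_le (hd p)
  · exact card_filter_notMem_thresholdIdeal_le _ k p

theorem hibiIdeal_pow_eq_iInf (k : ℕ) :
    HibiIdeal K P ^ k =
      ⨅ a : {a : P × P // a.1 ≤ a.2}, Ideal.span (X '' {Sum.inl a.1.1, Sum.inr a.1.2}) ^ k := by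
  refine le_antisymm
    (le_iInf fun a => Ideal.pow_right_mono (hibiIdeal_le_span_X_image K a.2) k) fun f hf => ?_
  refine mem_ideal_of_forall_monomial_mem fun d hd =>
    monomial_mem_hibiIdeal_pow K fun i j hij => ?_
  have order_le := mem_span_X_image_pow_iff.mp (Ideal.mem_iInf.mp hf ⟨(i, j), hij⟩)
  rw [← weight_indicator_one_pair Sum.inl_ne_inr]
  exact le_orderAlong_iff.mp order_le d hd

end Hibi

/-- For every `k ≥ 1`, the associated primes of the `k`-th power of a Hibi ideal are
exactly the primes `(x_i, y_j)` with `p_i ⪯ p_j`. -/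
theorem stmt17 (P : Type*) [Fintype P] [DecidableEq P] [PartialOrder P] :
    ∀ k : ℕ, 1 ≤ k →
      assPrimes K ((HibiIdeal K P) ^ k) =
        {q | ∃ i j : P, i ≤ j ∧
          q = Ideal.span {(X (Sum.inl i) : MvPolynomial (P ⊕ P) K), X (Sum.inr j)}} := by
  intro k hk
  have incomparable (a b : {a : P × P // a.1 ≤ a.2})
      (h : ({Sum.inl a.1.1, Sum.inr a.1.2} : Set (P ⊕ P)) ⊆ {Sum.inl b.1.1, Sum.inr b.1.2}) :
      a = b := by
    simpa [Set.insert_subset_iff, Subtype.ext_iff, Prod.ext_iff] using h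
  rw [assPrimes, hibiIdeal_pow_eq_iInf,
    associatedPrimes_quotient_iInf_span_X_image_pow incomparable fun _ => Nat.ne_zero_of_lt hk]
  ext q
  simp only [Set.mem_range, Subtype.exists, Prod.exists, Set.image_pair, Set.mem_ofPred_eq,
    exists_prop, eq_comm]

end
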